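/- Fix an integer g ≥ 0 and integers r̂, ŝ ≥ 0. Assume the string equation hypothesis holds for F_0, …, F_g. If Ψ_{r̂,ŝ,g,m}(W_1, …, W_{r̂} | V_1, …, V_{ŝ}) = 0 for all integers m ≥ 2g − 3 + r̂ + ŝ and all coordinate entries W_i = τ_{p_i}(γ_{x_i}), V_j = τ_{q_j}(γ_{y_j}), then for all integers 0 ≤ r ≤ r̂ and 0 ≤ s ≤ ŝ, Ψ_{r,s,g,m}(W_1, …, W_r | V_1, …, V_s) = 0 for all integers m ≥ 2g − 3 + r + s and all coordinate entries W_i, V_j. -/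

import Mathlib

open scoped BigOperators

namespace GWBigPhase

/-- The big phase space coefficient ring: formal power series over `ℚ` in the
variables `t_n^α`, indexed by pairs `(n, α) : ℕ × Fin N`. -/
abbrev R (N : ℕ) : Type := MvPowerSeries (ℕ × Fin N) ℚ

/-- Partial derivative of a multivariate power series with respect to the
variable indexed by `i`. -/
noncomputable def pderiv (N : ℕ) (i : ℕ × Fin N) (f : R N) : R N :=
  fun e => ((e i : ℚ) + 1) * MvPowerSeries.coeff (R := ℚ) (e + Finsupp.single i 1) f

/-- Coefficientwise (formally convergent) sum of a family of power series. -/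
noncomputable def seriesSum (N : ℕ) (f : ℕ × Fin N → R N) : R N :=
  fun e => ∑ᶠ p : ℕ × Fin N, MvPowerSeries.coeff (R := ℚ) e (f p)

/-- The bracket `⟨⟨τ_{n_1}(γ_{α_1}) ⋯ τ_{n_k}(γ_{α_k})⟩⟩_h`: iterated partial
derivative of `F h`, and `0` whenever some descendent level is negative. -/
noncomputable def Bracket (N : ℕ) (F : ℕ → R N) (h : ℕ) : List (ℤ × Fin N) → R N
  | [] => F h
  | (n, α) :: L => if 0 ≤ n then pderiv N (n.toNat, α) (Bracket N F h L) else 0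

/-- `t̃_n^α = t_n^α − δ_{α,1} δ_{n,1}` (the distinguished index `1` is `0 : Fin N`). -/
noncomputable def ttilde (N : ℕ) [NeZero N] (n : ℕ) (α : Fin N) : R N :=
  MvPowerSeries.X (n, α) - if n = 1 ∧ α = 0 then 1 else 0

/-- Interpret a list of coordinate entries `τ_n(γ_α)` with `n : ℕ` as entries
with integer descendent levels. -/
def coordList (N : ℕ) (L : List (ℕ × Fin N)) : List (ℤ × Fin N) :=
  L.map (fun p => ((p.1 : ℤ), p.2))

/-- Lower the descendent level of the `i`-th entry of a list by one (the
operator `τ_-` applied in the `i`-th slot). -/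
def lowerAt (N : ℕ) (L : List (ℤ × Fin N)) (i : ℕ) : List (ℤ × Fin N) :=
  L.mapIdx (fun j p => if j = i then (p.1 - 1, p.2) else p)

/-- The quantity `Ψ_{r,s,g,m}(W_1 ⋯ W_r | V_1 ⋯ V_s)`, where `r = Ws.length`
and `s = Vs.length`. -/
noncomputable def Psi (N : ℕ) [NeZero N] (ηinv : Matrix (Fin N) (Fin N) ℚ)
    (F : ℕ → R N) (g m : ℕ) (Ws Vs : List (ℤ × Fin N)) : R N :=
  (∑ k ∈ Finset.range (m + 1), ∑ g1 ∈ Finset.range (g + 1),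
      ∑ α : Fin N, ∑ β : Fin N,
        (-1 : R N) ^ k * MvPowerSeries.C (σ := ℕ × Fin N) (R := ℚ) (ηinv α β) *
          Bracket N F g1 (((k : ℤ), α) :: Ws) *
          Bracket N F (g - g1) ((((m - k : ℕ) : ℤ), β) :: Vs))
  - (match Ws with
     | [] => seriesSum N (fun p =>
         ttilde N p.1 p.2 * Bracket N F g (((p.1 : ℤ) + (m : ℤ) + 1, p.2) :: Vs))
     | [w] => Bracket N F g ((w.1 + (m : ℤ) + 1, w.2) :: Vs)
     | _ => 0)
  + (-1 : R N) ^ (m + 1) *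
    (match Vs with
     | [] => seriesSum N (fun p =>
         ttilde N p.1 p.2 * Bracket N F g (((p.1 : ℤ) + (m : ℤ) + 1, p.2) :: Ws))
     | [v] => Bracket N F g (Ws ++ [(v.1 + (m : ℤ) + 1, v.2)])
     | _ => 0)

/-- `Ψ_{r+1,s,g,m}(W_1 ⋯ W_r S | V_1 ⋯ V_s)`: the value of `Ψ` with the string
vector field `S = −Σ_{n,α} t̃_n^α τ_{n−1}(γ_α)` inserted as the last `W`-entry,
expanded by `R`-multilinearity of `Ψ`. -/
noncomputable def PsiS (N : ℕ) [NeZero N] (ηinv : Matrix (Fin N) (Fin N) ℚ)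
    (F : ℕ → R N) (g m : ℕ) (Ws Vs : List (ℤ × Fin N)) : R N :=
  - seriesSum N (fun p =>
      ttilde N p.1 p.2 * Psi N ηinv F g m (Ws ++ [((p.1 : ℤ) - 1, p.2)]) Vs)

/-- The string equation hypothesis for `F_0, …, F_g`. -/
def StringEqHyp (N : ℕ) [NeZero N] (η : Matrix (Fin N) (Fin N) ℚ)
    (F : ℕ → R N) (g : ℕ) : Prop :=
  ∀ h : ℕ, h ≤ g →
    pderiv N ((0 : ℕ), (0 : Fin N)) (F h) =
      seriesSum N (fun p => MvPowerSeries.X (p.1 + 1, p.2) * pderiv N p (F h)) +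
      (if h = 0 then
        MvPowerSeries.C (σ := ℕ × Fin N) (R := ℚ) (1 / 2) *
          ∑ α : Fin N, ∑ β : Fin N,
            MvPowerSeries.C (σ := ℕ × Fin N) (R := ℚ) (η α β) *
              MvPowerSeries.X ((0 : ℕ), α) * MvPowerSeries.X ((0 : ℕ), β)
       else 0)

section Derivatives

variable {N : ℕ}

theorem pderiv_eq (i : ℕ × Fin N) (f : R N) : pderiv N i f = MvPowerSeries.pderiv ℚ i f := by
  ext e
  rw [MvPowerSeries.coeff_pderiv, mul_comm]
  rfl

theorem mvPderiv_comm (i j : ℕ × Fin N) (f : R N) :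
    MvPowerSeries.pderiv ℚ i (MvPowerSeries.pderiv ℚ j f) =
      MvPowerSeries.pderiv ℚ j (MvPowerSeries.pderiv ℚ i f) := by
  rcases eq_or_ne i j with rfl | hij
  · rfl
  ext e
  simp only [MvPowerSeries.coeff_pderiv, Finsupp.add_apply, Finsupp.single_eq_of_ne hij,
    Finsupp.single_eq_of_ne hij.symm, add_zero, add_right_comm e]
  ring

/-- Iterated partial derivative along a list of coordinates. -/
noncomputable def iterPderiv (L : List (ℕ × Fin N)) (f : R N) : R N :=
  L.foldr (fun i f => MvPowerSeries.pderiv ℚ i f) f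

@[simp]
theorem iterPderiv_nil (f : R N) : iterPderiv [] f = f := rfl

@[simp]
theorem iterPderiv_cons (i : ℕ × Fin N) (L : List (ℕ × Fin N)) (f : R N) :
    iterPderiv (i :: L) f = MvPowerSeries.pderiv ℚ i (iterPderiv L f) := rfl

theorem iterPderiv_perm {L L' : List (ℕ × Fin N)} (h : L.Perm L') (f : R N) :
    iterPderiv L f = iterPderiv L' f := by
  induction h with
  | nil => rfl
  | cons i _ ih => simp [ih]
  | swap i j L => simp [mvPderiv_comm i j]
  | trans _ _ h₁ h₂ => exact h₁.trans h₂

@[simp]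
theorem iterPderiv_zero (L : List (ℕ × Fin N)) : iterPderiv L (0 : R N) = 0 := by
  induction L with
  | nil => rfl
  | cons i L ih => simp [ih]

@[simp]
theorem iterPderiv_neg (L : List (ℕ × Fin N)) (f : R N) :
    iterPderiv L (-f) = -iterPderiv L f := by
  induction L with
  | nil => rfl
  | cons i L ih => simp [ih]

theorem bracket_coordList (F : ℕ → R N) (h : ℕ) (L : List (ℕ × Fin N)) :
    Bracket N F h (coordList N L) = iterPderiv L (F h) := by
  induction L with
  | nil => rfl
  | cons i L ih =>
    rw [iterPderiv_cons, ← ih, ← pderiv_eq]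
    simp [coordList, Bracket]

end Derivatives

section FormalSums

variable {N : ℕ}

theorem coeff_seriesSum (e : ℕ × Fin N →₀ ℕ) (f : ℕ × Fin N → R N) :
    MvPowerSeries.coeff e (seriesSum N f) = ∑ᶠ p, MvPowerSeries.coeff e (f p) := rfl

theorem coeff_seriesSum_eq_sum {e : ℕ × Fin N →₀ ℕ} {f : ℕ × Fin N → R N}
    {s : Finset (ℕ × Fin N)} (h : ∀ p ∉ s, MvPowerSeries.coeff e (f p) = 0) :
    MvPowerSeries.coeff e (seriesSum N f) = ∑ p ∈ s, MvPowerSeries.coeff e (f p) := by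
  rw [coeff_seriesSum]
  refine finsum_eq_sum_of_support_subset _ fun p hp => ?_
  by_contra hps
  exact hp (h p hps)

theorem pderiv_seriesSum (q : ℕ × Fin N) (f : ℕ × Fin N → R N) :
    MvPowerSeries.pderiv ℚ q (seriesSum N f) =
      seriesSum N fun p => MvPowerSeries.pderiv ℚ q (f p) := by
  ext e
  simp only [MvPowerSeries.coeff_pderiv, coeff_seriesSum, mul_comm _ ((e q : ℚ) + 1), mul_finsum]

theorem seriesSum_eq_single {f : ℕ × Fin N → R N} (a : ℕ × Fin N) (h : ∀ p, p ≠ a → f p = 0) :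
    seriesSum N f = f a := by
  ext e
  rw [coeff_seriesSum, finsum_eq_single _ a fun p hp => by simp [h p hp]]

/-- A family of power series all of whose formal linear combinations converge coefficientwise. -/
def CoeffFinite (c : ℕ × Fin N → R N) : Prop :=
  ∀ e : ℕ × Fin N →₀ ℕ, ∃ s : Finset (ℕ × Fin N), ∀ p ∉ s, ∀ f : R N,
    MvPowerSeries.coeff e (c p * f) = 0

theorem CoeffFinite.add {c d : ℕ × Fin N → R N} (hc : CoeffFinite c) (hd : CoeffFinite d) :
    CoeffFinite fun p => c p + d p := by
  classical
  intro e
  obtain ⟨s, hs⟩ := hc e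
  obtain ⟨t, ht⟩ := hd e
  refine ⟨s ∪ t, fun p hp f => ?_⟩
  rw [Finset.notMem_union] at hp
  rw [add_mul, map_add, hs p hp.1, ht p hp.2, add_zero]

theorem coeffFinite_single (a : ℕ × Fin N) (f : ℕ × Fin N → R N) :
    CoeffFinite fun p => if p = a then f p else 0 := fun _ =>
  ⟨{a}, fun p hp f => by simp [show p ≠ a by simpa using hp]⟩

theorem coeffFinite_X (φ : ℕ × Fin N ↪ ℕ × Fin N) :
    CoeffFinite fun p => (MvPowerSeries.X (φ p) : R N) := by
  intro e
  refine ⟨e.support.preimage φ φ.injective.injOn, fun p hp f => ?_⟩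
  refine (MvPowerSeries.coeff_monomial_mul _ _ _ _).trans (if_neg ?_)
  intro hle
  have := hle (φ p)
  simp_all

/-- The formal linear combination `∑ₚ cₚ fₚ`, as a linear map in the family `f`. -/
noncomputable def weightedSum (c : ℕ × Fin N → R N) (hc : CoeffFinite c) :
    (ℕ × Fin N → R N) →ₗ[R N] R N where
  toFun f := seriesSum N fun p => c p * f p
  map_add' f f' := by
    ext e
    obtain ⟨s, hs⟩ := hc e
    rw [map_add, coeff_seriesSum_eq_sum fun p hp => hs p hp _,
      coeff_seriesSum_eq_sum fun p hp => hs p hp _,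
      coeff_seriesSum_eq_sum fun p hp => hs p hp _, ← Finset.sum_add_distrib]
    simp [mul_add]
  map_smul' a f := by
    ext e
    rw [RingHom.id_apply, smul_eq_mul, MvPowerSeries.coeff_mul]
    choose s hs using hc
    classical
    let t := s e ∪ (Finset.HasAntidiagonal.antidiagonal e).biUnion fun x => s x.2
    have ht : ∀ x ∈ Finset.HasAntidiagonal.antidiagonal e, ∀ p ∉ t,
        MvPowerSeries.coeff x.2 (c p * f p) = 0 := fun x hx p hp =>
      hs x.2 p (fun h => hp (Finset.mem_union_right _ (Finset.mem_biUnion.2 ⟨x, hx, h⟩))) _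
    rw [Finset.sum_congr rfl fun x hx => by rw [coeff_seriesSum_eq_sum (ht x hx)],
      coeff_seriesSum_eq_sum (s := t) fun p hp =>
        hs e p (fun h => hp (Finset.mem_union_left _ h)) _]
    simp_rw [Finset.mul_sum]
    rw [Finset.sum_comm]
    refine Finset.sum_congr rfl fun p _ => ?_
    rw [← MvPowerSeries.coeff_mul, Pi.smul_apply, smul_eq_mul, mul_left_comm]

theorem weightedSum_apply (c : ℕ × Fin N → R N) (hc : CoeffFinite c) (f : ℕ × Fin N → R N) :
    weightedSum c hc f = seriesSum N fun p => c p * f p := rfl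

theorem weightedSum_comm {c d : ℕ × Fin N → R N} (hc : CoeffFinite c) (hd : CoeffFinite d)
    (f : ℕ × Fin N → ℕ × Fin N → R N) :
    weightedSum c hc (fun p => weightedSum d hd (f p)) =
      weightedSum d hd fun q => weightedSum c hc fun p => f p q := by
  ext e
  obtain ⟨s, hs⟩ := hc e
  obtain ⟨t, ht⟩ := hd e
  rw [weightedSum_apply c, coeff_seriesSum_eq_sum fun p hp => hs p hp _,
    weightedSum_apply d, coeff_seriesSum_eq_sum fun p hp => ht p hp _]
  simp_rw [← smul_eq_mul, ← map_smul, weightedSum_apply]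
  rw [Finset.sum_congr rfl fun p _ => coeff_seriesSum_eq_sum fun q hq => ht q hq _,
    Finset.sum_congr rfl fun q _ => coeff_seriesSum_eq_sum fun p hp => hs p hp _,
    Finset.sum_comm]
  refine Finset.sum_congr rfl fun q _ => Finset.sum_congr rfl fun p _ => ?_
  simp only [Pi.smul_apply, smul_eq_mul, mul_left_comm]

theorem seriesSum_add_mul {c d : ℕ × Fin N → R N} (hc : CoeffFinite c) (hd : CoeffFinite d)
    (f g : ℕ × Fin N → R N) :
    seriesSum N (fun p => c p * f p + d p * g p) =
      seriesSum N (fun p => c p * f p) + seriesSum N fun p => d p * g p := by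
  classical
  ext e
  obtain ⟨s, hs⟩ := hc e
  obtain ⟨t, ht⟩ := hd e
  have hs' : ∀ p ∉ s ∪ t, ∀ f : R N, MvPowerSeries.coeff e (c p * f) = 0 := fun p hp =>
    hs p fun h => hp (Finset.mem_union_left _ h)
  have ht' : ∀ p ∉ s ∪ t, ∀ f : R N, MvPowerSeries.coeff e (d p * f) = 0 := fun p hp =>
    ht p fun h => hp (Finset.mem_union_right _ h)
  rw [map_add, coeff_seriesSum_eq_sum fun p hp => hs' p hp _,
    coeff_seriesSum_eq_sum fun p hp => ht' p hp _, ← Finset.sum_add_distrib,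
    coeff_seriesSum_eq_sum fun p hp => by rw [map_add, hs' p hp, ht' p hp, add_zero]]
  simp

/-- `(n, α) ↦ (n + 1, α)`. -/
def raise (N : ℕ) : ℕ × Fin N ↪ ℕ × Fin N where
  toFun p := (p.1 + 1, p.2)
  inj' p q h := by simpa [Prod.ext_iff] using h

@[simp]
theorem raise_apply (p : ℕ × Fin N) : raise N p = (p.1 + 1, p.2) := rfl

/-- Evaluation of a family at a coordinate with its level lowered by one, or `0` if the level
is already `0`. -/
noncomputable def lowerEntry : ℕ × Fin N → (ℕ × Fin N → R N) →ₗ[R N] R N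
  | (0, _) => 0
  | (n + 1, α) => LinearMap.proj (n, α)

theorem seriesSum_ite_raise (q : ℕ × Fin N) (f : ℕ × Fin N → R N) :
    (seriesSum N fun p => (if raise N p = q then 1 else 0) * f p) = lowerEntry q f := by
  obtain ⟨_ | n, α⟩ := q
  · rw [seriesSum_eq_single (0, α) fun p _ => by simp]
    simp [lowerEntry]
  · rw [seriesSum_eq_single (n, α) fun p hp => by simpa [Prod.ext_iff] using fun h => by grind]
    simp [lowerEntry]

end FormalSums

section TildeSums

variable {N : ℕ} [NeZero N]

theorem coeffFinite_ttilde (φ : ℕ × Fin N ↪ ℕ × Fin N) :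
    CoeffFinite fun p => ttilde N (φ p).1 (φ p).2 := by
  have hX := coeffFinite_X φ
  by_cases h : ∃ a, φ a = (1, 0)
  · obtain ⟨a, ha⟩ := h
    convert hX.add (coeffFinite_single a fun _ => -1) using 2 with p
    rw [ttilde, sub_eq_add_neg]
    have : ((φ p).1 = 1 ∧ (φ p).2 = 0) ↔ p = a := by
      rw [← φ.injective.eq_iff, ha, Prod.ext_iff]
    simp only [this]
    split_ifs <;> simp
  · convert hX using 2 with p
    rw [ttilde, if_neg, sub_zero]
    exact fun hp => h ⟨p, Prod.ext hp.1 hp.2⟩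

theorem pderiv_ttilde (q p : ℕ × Fin N) :
    MvPowerSeries.pderiv ℚ q (ttilde N p.1 p.2) = if p = q then 1 else 0 := by
  rw [ttilde, map_sub]
  have : MvPowerSeries.pderiv ℚ q (if p.1 = 1 ∧ p.2 = 0 then 1 else 0 : R N) = 0 := by
    split_ifs <;> simp
  rw [this, sub_zero]
  split_ifs with h
  · simp [h]
  · exact MvPowerSeries.pderiv_X_of_ne h

/-- `f ↦ ∑ₚ t̃ₚ fₚ`. -/
noncomputable def tildeSum (N : ℕ) [NeZero N] : (ℕ × Fin N → R N) →ₗ[R N] R N :=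
  weightedSum _ (coeffFinite_ttilde (Function.Embedding.refl _))

/-- `f ↦ ∑_{n,α} t̃_{n+1}^α f_{n,α}`, the negative of insertion of the string vector field. -/
noncomputable def stringSum (N : ℕ) [NeZero N] : (ℕ × Fin N → R N) →ₗ[R N] R N :=
  weightedSum _ (coeffFinite_ttilde (raise N))

theorem tildeSum_apply (f : ℕ × Fin N → R N) :
    tildeSum N f = seriesSum N fun p => ttilde N p.1 p.2 * f p := rfl

theorem stringSum_apply (f : ℕ × Fin N → R N) :
    stringSum N f = seriesSum N fun p => ttilde N (p.1 + 1) p.2 * f p := rfl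

theorem stringSum_tildeSum (f : ℕ × Fin N → ℕ × Fin N → R N) :
    stringSum N (fun p => tildeSum N (f p)) = tildeSum N fun q => stringSum N fun p => f p q :=
  weightedSum_comm _ _ f

theorem pderiv_stringSum (q : ℕ × Fin N) (f : ℕ × Fin N → R N) :
    MvPowerSeries.pderiv ℚ q (stringSum N f) =
      stringSum N (fun p => MvPowerSeries.pderiv ℚ q (f p)) + lowerEntry q f := by
  have hraise : CoeffFinite fun p => (if raise N p = q then 1 else 0 : R N) := by
    obtain ⟨_ | n, α⟩ := q
    · exact fun _ => ⟨∅, fun p _ f => by simp⟩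
    · convert coeffFinite_single (N := N) (n, α) fun _ => 1 using 3 with p
      simp [Prod.ext_iff]
  rw [stringSum_apply, pderiv_seriesSum, ← seriesSum_ite_raise, stringSum_apply]
  refine Eq.trans ?_ (seriesSum_add_mul (coeffFinite_ttilde (raise N)) hraise _ _)
  congr 1
  funext p
  have h := pderiv_ttilde q (raise N p)
  rw [raise_apply] at h
  rw [Derivation.leibniz, smul_eq_mul, smul_eq_mul, raise_apply, h, mul_comm (f p)]

theorem tildeSum_eq_stringSum_add (f : ℕ × Fin N → R N) :
    tildeSum N f = stringSum N (fun p => f (raise N p)) +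
      ∑ α : Fin N, MvPowerSeries.X (0, α) * f (0, α) := by
  ext e
  obtain ⟨s, hs⟩ := coeffFinite_ttilde (Function.Embedding.refl (ℕ × Fin N)) e
  obtain ⟨n, hn⟩ : ∃ n, ∀ p ∈ s, p.1 < n :=
    ⟨s.sup Prod.fst + 1, fun p hp => Nat.lt_succ_of_le (Finset.le_sup (f := Prod.fst) hp)⟩
  have hvanish : ∀ p : ℕ × Fin N, n ≤ p.1 → ∀ f : R N,
      MvPowerSeries.coeff e (ttilde N p.1 p.2 * f) = 0 := fun p hp f =>
    hs p (fun h => (hn p h).not_ge hp) f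
  have hstring : ∀ p : ℕ × Fin N, p ∉ Finset.range n ×ˢ (Finset.univ : Finset (Fin N)) →
      MvPowerSeries.coeff e (ttilde N (p.1 + 1) p.2 * f (raise N p)) = 0 := fun p hp =>
    hvanish (raise N p) (by simp at hp ⊢; omega) _
  rw [map_add, tildeSum_apply, stringSum_apply,
    coeff_seriesSum_eq_sum (s := Finset.range (n + 1) ×ˢ Finset.univ) fun p hp =>
      hvanish p (by simp at hp; omega) _,
    coeff_seriesSum_eq_sum hstring,
    Finset.sum_product, Finset.sum_product, Finset.sum_range_succ', map_sum]
  simp [ttilde]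

theorem stringSum_eq_sub (f : ℕ × Fin N → R N) :
    stringSum N f =
      seriesSum N (fun p => MvPowerSeries.X (p.1 + 1, p.2) * f p) - f (0, 0) := by
  have h := seriesSum_add_mul (coeffFinite_X (raise N))
    (coeffFinite_single (0, 0) fun _ => -1) f f
  rw [seriesSum_eq_single (f := fun p => (if p = (0, 0) then -1 else 0) * f p) (0, 0)
    fun p hp => by simp [hp]] at h
  rw [stringSum_apply, sub_eq_add_neg]
  convert h using 2
  · funext p
    rw [ttilde, sub_mul, sub_eq_add_neg]
    by_cases hp : p.1 = 0 ∧ p.2 = 0 <;> simp [Prod.ext_iff, hp]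
  · rfl
  · rw [if_pos rfl, neg_one_mul]

end TildeSums

section StringEquation

variable {N : ℕ}

/-- The sum of the values of a function over all lists obtained from a given list by lowering the
level of one entry of positive level. -/
noncomputable def lowerSum : List (ℕ × Fin N) → (List (ℕ × Fin N) → R N) →ₗ[R N] R N
  | [] => 0
  | w :: L => (lowerEntry w).comp (LinearMap.funLeft (R N) (R N) (· :: L)) +
      (lowerSum L).comp (LinearMap.funLeft (R N) (R N) (w :: ·))

@[simp]
theorem lowerSum_nil (Φ : List (ℕ × Fin N) → R N) : lowerSum [] Φ = 0 := rfl

theorem lowerSum_cons (w : ℕ × Fin N) (L : List (ℕ × Fin N)) (Φ : List (ℕ × Fin N) → R N) :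
    lowerSum (w :: L) Φ =
      lowerEntry w (fun v => Φ (v :: L)) + lowerSum L fun L' => Φ (w :: L') := rfl

theorem lowerSum_eq_zero (L : List (ℕ × Fin N)) (Φ : List (ℕ × Fin N) → R N)
    (h : ∀ L' : List (ℕ × Fin N), L'.length = L.length →
      (L'.map Prod.fst).sum < (L.map Prod.fst).sum → Φ L' = 0) :
    lowerSum L Φ = 0 := by
  induction L generalizing Φ with
  | nil => rfl
  | cons w L ih =>
    rw [lowerSum_cons, ih _ fun L' hl hs => h _ (by simp [hl]) (by simpa using hs), add_zero]
    obtain ⟨_ | n, α⟩ := w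
    · rfl
    · exact h _ (by simp) (by simp)

theorem map_lowerEntry (D : R N →+ R N) (w : ℕ × Fin N) (f : ℕ × Fin N → R N) :
    D (lowerEntry w f) = lowerEntry w fun v => D (f v) := by
  obtain ⟨_ | n, α⟩ := w
  · exact map_zero D
  · rfl

theorem map_lowerSum (D : R N →+ R N) (L : List (ℕ × Fin N)) (Φ : List (ℕ × Fin N) → R N) :
    D (lowerSum L Φ) = lowerSum L fun L' => D (Φ L') := by
  induction L generalizing Φ with
  | nil => exact map_zero D
  | cons w L ih => rw [lowerSum_cons, lowerSum_cons, map_add, ih, map_lowerEntry]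

theorem linearMap_lowerEntry {ι : Type*} (ℓ : (ι → R N) →ₗ[R N] R N) (w : ℕ × Fin N)
    (f : ι → ℕ × Fin N → R N) :
    ℓ (fun i => lowerEntry w (f i)) = lowerEntry w fun v => ℓ fun i => f i v := by
  obtain ⟨_ | n, α⟩ := w
  · exact map_zero ℓ
  · rfl

theorem linearMap_lowerSum {ι : Type*} (ℓ : (ι → R N) →ₗ[R N] R N) (L : List (ℕ × Fin N))
    (Φ : ι → List (ℕ × Fin N) → R N) :
    ℓ (fun i => lowerSum L (Φ i)) = lowerSum L fun L' => ℓ fun i => Φ i L' := by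
  induction L generalizing Φ with
  | nil => exact map_zero ℓ
  | cons w L ih =>
    simp only [lowerSum_cons]
    rw [← ih, ← linearMap_lowerEntry, ← map_add]
    rfl

theorem iterPderiv_cons_eq (i : ℕ × Fin N) (L : List (ℕ × Fin N)) (f : R N) :
    iterPderiv (i :: L) f = iterPderiv L (MvPowerSeries.pderiv ℚ i f) := by
  induction L with
  | nil => rfl
  | cons j L ih =>
    rw [iterPderiv_cons j, ← ih, iterPderiv_perm (.swap j i L), iterPderiv_cons j]

theorem stringSum_iterPderiv [NeZero N] (L : List (ℕ × Fin N)) (f : R N) :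
    stringSum N (fun p => iterPderiv (p :: L) f) =
      iterPderiv L (stringSum N fun p => MvPowerSeries.pderiv ℚ p f) -
        lowerSum L fun L' => iterPderiv L' f := by
  induction L with
  | nil => simp
  | cons q L ih =>
    have h := congrArg (MvPowerSeries.pderiv ℚ q) ih
    rw [pderiv_stringSum, map_sub] at h
    have hlow := map_lowerSum (MvPowerSeries.pderiv ℚ q : R N →+ R N) L fun L' => iterPderiv L' f
    simp only [AddMonoidHom.coe_coe] at hlow
    rw [hlow, ← iterPderiv_cons, ← eq_sub_iff_add_eq] at h
    simp only [iterPderiv_perm (.swap q _ L)]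
    simp only [lowerSum_cons, iterPderiv_cons] at h ⊢
    rw [h]
    ring

/-- The quadratic term `½ ∑ η_{αβ} t_0^α t_0^β` of the genus zero string equation. -/
noncomputable def stringTerm (η : Matrix (Fin N) (Fin N) ℚ) : R N :=
  MvPowerSeries.C (σ := ℕ × Fin N) (R := ℚ) (1 / 2) *
    ∑ α : Fin N, ∑ β : Fin N, MvPowerSeries.C (σ := ℕ × Fin N) (R := ℚ) (η α β) *
      MvPowerSeries.X ((0 : ℕ), α) * MvPowerSeries.X ((0 : ℕ), β)

theorem pderiv_C_mul (q : ℕ × Fin N) (a : ℚ) (f : R N) :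
    MvPowerSeries.pderiv ℚ q (MvPowerSeries.C a * f) =
      MvPowerSeries.C a * MvPowerSeries.pderiv ℚ q f := by
  simp [Derivation.leibniz]

theorem pderiv_zero_X_zero (α β : Fin N) :
    MvPowerSeries.pderiv ℚ (0, α) (MvPowerSeries.X ((0 : ℕ), β) : R N) =
      if α = β then 1 else 0 := by
  split_ifs with h
  · simp [h]
  · exact MvPowerSeries.pderiv_X_of_ne (by simpa using Ne.symm h)

theorem pderiv_succ_stringTerm (η : Matrix (Fin N) (Fin N) ℚ) (n : ℕ) (α : Fin N) :
    MvPowerSeries.pderiv ℚ (n + 1, α) (stringTerm η) = 0 := by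
  simp [stringTerm, mul_assoc, Derivation.leibniz (_ : Derivation ℚ (R N) (R N))
    (MvPowerSeries.X _)]

theorem pderiv_zero_stringTerm {η : Matrix (Fin N) (Fin N) ℚ} (hη : ∀ α β, η α β = η β α)
    (α : Fin N) :
    MvPowerSeries.pderiv ℚ (0, α) (stringTerm η) =
      ∑ β, MvPowerSeries.C (η α β) * MvPowerSeries.X ((0 : ℕ), β) := by
  have h2 : (MvPowerSeries.C (1 / 2) : R N) * 2 = 1 := by
    rw [← map_ofNat MvPowerSeries.C, ← map_mul]
    norm_num
  simp only [stringTerm, pderiv_C_mul, mul_assoc, map_sum, Derivation.leibniz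
    (_ : Derivation ℚ (R N) (R N)) (MvPowerSeries.X _), pderiv_zero_X_zero, smul_eq_mul, mul_add,
    Finset.sum_add_distrib, mul_ite, mul_one, mul_zero, Finset.sum_ite_eq, Finset.mem_univ, if_true]
  rw [Finset.sum_comm (f := fun x y => if α = x then _ else _)]
  simp only [Finset.sum_ite_eq, Finset.mem_univ, if_true, hη _ α]
  linear_combination (∑ β, MvPowerSeries.C (η α β) * MvPowerSeries.X ((0 : ℕ), β)) * h2

theorem iterPderiv_succ_stringTerm (η : Matrix (Fin N) (Fin N) ℚ) (n : ℕ) (α : Fin N)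
    (L : List (ℕ × Fin N)) : iterPderiv ((n + 1, α) :: L) (stringTerm η) = 0 := by
  rw [iterPderiv_cons_eq, pderiv_succ_stringTerm, iterPderiv_zero]

theorem iterPderiv_pair_stringTerm {η : Matrix (Fin N) (Fin N) ℚ} (hη : ∀ α β, η α β = η β α)
    (α β : Fin N) :
    iterPderiv [(0, α), (0, β)] (stringTerm η) = MvPowerSeries.C (η α β) := by
  simp [pderiv_zero_stringTerm hη, pderiv_zero_X_zero, hη α β]

theorem iterPderiv_triple_stringTerm {η : Matrix (Fin N) (Fin N) ℚ} (hη : ∀ α β, η α β = η β α)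
    (p q r : ℕ × Fin N) (L : List (ℕ × Fin N)) :
    iterPderiv (p :: q :: r :: L) (stringTerm η) = 0 := by
  obtain ⟨_ | n, α⟩ := p
  · obtain ⟨_ | m, β⟩ := q
    · have h := congrArg (MvPowerSeries.pderiv ℚ r) (iterPderiv_pair_stringTerm hη β α)
      simp only [iterPderiv_cons, iterPderiv_nil, MvPowerSeries.pderiv_C] at h
      rw [iterPderiv_cons_eq, iterPderiv_cons_eq, iterPderiv_cons_eq, h, iterPderiv_zero]
    · rw [iterPderiv_perm (.swap _ _ _), iterPderiv_succ_stringTerm]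
  · rw [iterPderiv_succ_stringTerm]

variable [NeZero N] {η : Matrix (Fin N) (Fin N) ℚ} {F : ℕ → R N} {g : ℕ}

theorem StringEqHyp.stringSum_pderiv (hF : StringEqHyp N η F g) {h : ℕ} (hh : h ≤ g) :
    stringSum N (fun p => MvPowerSeries.pderiv ℚ p (F h)) =
      -if h = 0 then stringTerm η else 0 := by
  have := hF h hh
  simp only [pderiv_eq] at this
  rw [stringSum_eq_sub, this, stringTerm]
  ring

/-- The string equation with additional insertions. -/
theorem StringEqHyp.stringSum_iterPderiv (hF : StringEqHyp N η F g) {h : ℕ} (hh : h ≤ g)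
    (L : List (ℕ × Fin N)) :
    stringSum N (fun p => iterPderiv (p :: L) (F h)) =
      -(if h = 0 then iterPderiv L (stringTerm η) else 0) -
        lowerSum L fun L' => iterPderiv L' (F h) := by
  rw [GWBigPhase.stringSum_iterPderiv, hF.stringSum_pderiv hh, iterPderiv_neg]
  split_ifs <;> simp

end StringEquation

section SplitSum

variable {N : ℕ}

/-- `∑ₖ ∑_{g₁+g₂=g} (-1)ᵏ η^{αβ} A_{g₁}(τ_k(γ_α)) B_{g₂}(τ_{m-k}(γ_β))`. -/
noncomputable def splitSum (ηinv : Matrix (Fin N) (Fin N) ℚ) (g m : ℕ)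
    (A B : ℕ → ℕ × Fin N → R N) : R N :=
  ∑ k ∈ Finset.range (m + 1), ∑ g1 ∈ Finset.range (g + 1), ∑ α : Fin N, ∑ β : Fin N,
    (-1 : R N) ^ k * MvPowerSeries.C (σ := ℕ × Fin N) (R := ℚ) (ηinv α β) *
      A g1 (k, α) * B (g - g1) (m - k, β)

variable (ηinv : Matrix (Fin N) (Fin N) ℚ) (g m : ℕ)

theorem linearMap_sum {ι κ : Type*} (ℓ : (ι → R N) →ₗ[R N] R N) (s : Finset κ)
    (f : ι → κ → R N) : ℓ (fun i => ∑ j ∈ s, f i j) = ∑ j ∈ s, ℓ fun i => f i j := by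
  rw [← map_sum]
  congr 1
  funext i
  simp

theorem linearMap_mul_mul {ι : Type*} (ℓ : (ι → R N) →ₗ[R N] R N) (a b : R N) (f : ι → R N) :
    ℓ (fun i => a * f i * b) = a * ℓ f * b := by
  rw [mul_right_comm, ← smul_eq_mul (a * b), ← map_smul]
  congr 1
  funext i
  simp only [Pi.smul_apply, smul_eq_mul]
  ring

theorem linearMap_splitSum {ι : Type*} (ℓ : (ι → R N) →ₗ[R N] R N)
    (A : ι → ℕ → ℕ × Fin N → R N) (B : ℕ → ℕ × Fin N → R N) :
    ℓ (fun i => splitSum ηinv g m (A i) B) =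
      splitSum ηinv g m (fun h q => ℓ fun i => A i h q) B := by
  simp only [splitSum, linearMap_sum, linearMap_mul_mul]

theorem splitSum_congr {A A' : ℕ → ℕ × Fin N → R N} (B : ℕ → ℕ × Fin N → R N)
    (h : ∀ h ≤ g, ∀ q, A h q = A' h q) :
    splitSum ηinv g m A B = splitSum ηinv g m A' B := by
  refine Finset.sum_congr rfl fun k _ => Finset.sum_congr rfl fun g1 hg1 => ?_
  simp only [h g1 (Nat.lt_succ_iff.1 (Finset.mem_range.1 hg1))]

theorem splitSum_sub (A A' B : ℕ → ℕ × Fin N → R N) :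
    splitSum ηinv g m (fun h q => A h q - A' h q) B =
      splitSum ηinv g m A B - splitSum ηinv g m A' B := by
  simp only [splitSum, mul_sub, sub_mul, Finset.sum_sub_distrib]

theorem splitSum_neg (A B : ℕ → ℕ × Fin N → R N) :
    splitSum ηinv g m (fun h q => -A h q) B = -splitSum ηinv g m A B := by
  simp only [splitSum, mul_neg, neg_mul, Finset.sum_neg_distrib]

theorem splitSum_lowerEntry (A B : ℕ → ℕ × Fin N → R N) :
    splitSum ηinv g (m + 1) (fun h q => lowerEntry q (A h)) B = -splitSum ηinv g m A B := by
  rw [splitSum, Finset.sum_range_succ']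
  simp [splitSum, lowerEntry, pow_succ, Nat.add_sub_add_right]

theorem splitSum_genus_zero {P : ℕ × Fin N → R N} (hP : ∀ n α, P (n + 1, α) = 0)
    (B : ℕ → ℕ × Fin N → R N) :
    splitSum ηinv g m (fun h q => if h = 0 then P q else 0) B =
      ∑ α : Fin N, ∑ β : Fin N, MvPowerSeries.C (ηinv α β) * P (0, α) * B g (m, β) := by
  rw [splitSum, Finset.sum_range_succ', Finset.sum_range_succ']
  simp [hP]

theorem splitSum_swap (hηinv : ∀ α β, ηinv α β = ηinv β α) (A B : ℕ → ℕ × Fin N → R N) :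
    splitSum ηinv g m A B = (-1) ^ m * splitSum ηinv g m B A := by
  rw [splitSum, splitSum, ← Finset.sum_range_reflect, Finset.mul_sum]
  refine Finset.sum_congr rfl fun k hk => ?_
  rw [← Finset.sum_range_reflect, Finset.mul_sum]
  refine Finset.sum_congr rfl fun g1 hg1 => ?_
  rw [Finset.sum_comm, Finset.mul_sum]
  refine Finset.sum_congr rfl fun α _ => ?_
  rw [Finset.mul_sum]
  refine Finset.sum_congr rfl fun β _ => ?_
  rw [Finset.mem_range] at hk hg1
  have hsign : (-1 : R N) ^ (m - k) = (-1) ^ m * (-1) ^ k := by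
    rw [← pow_add, show m + k = (m - k) + 2 * k by omega, pow_add, pow_mul]
    simp
  rw [show m + 1 - 1 - k = m - k by omega, show g + 1 - 1 - g1 = g - g1 by omega,
    show m - (m - k) = k by omega, show g - (g - g1) = g1 by omega, hsign, hηinv β α]
  ring

end SplitSum

section Contraction

variable {N : ℕ} {η ηinv : Matrix (Fin N) (Fin N) ℚ}

theorem inverse_symm (hη : ∀ α β, η α β = η β α) (hinv : η * ηinv = 1) (α β : Fin N) :
    ηinv α β = ηinv β α := by
  have hηT : η.transpose = η := by
    ext α β
    exact hη β α
  have h : ηinv.transpose * η = 1 := by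
    rw [← Matrix.transpose_inj, Matrix.transpose_mul, Matrix.transpose_transpose, hηT, hinv,
      Matrix.transpose_one]
  have h' : ηinv.transpose = ηinv := left_inv_eq_right_inv h hinv
  exact congrFun (congrFun h' β) α

theorem sum_contract (hη : ∀ α β, η α β = η β α) (hinv : η * ηinv = 1) (γ : Fin N)
    (b : Fin N → R N) :
    ∑ α, ∑ β, MvPowerSeries.C (ηinv α β) * MvPowerSeries.C (η α γ) * b β = b γ := by
  have h : ∀ β, ∑ α, (MvPowerSeries.C (ηinv α β) * MvPowerSeries.C (η α γ) : R N) =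
      if γ = β then 1 else 0 := fun β => by
    have := congrFun (congrFun hinv γ) β
    rw [Matrix.mul_apply, Matrix.one_apply] at this
    simp only [← map_mul, ← map_sum, hη _ γ, mul_comm (ηinv _ _), this]
    split_ifs <;> simp
  rw [Finset.sum_comm]
  simp [← Finset.sum_mul, h]

theorem sum_contract_stringTerm_nil (hη : ∀ α β, η α β = η β α) (hinv : η * ηinv = 1)
    (b : Fin N → R N) :
    ∑ α, ∑ β, MvPowerSeries.C (ηinv α β) * iterPderiv [(0, α)] (stringTerm η) * b β =
      ∑ β, MvPowerSeries.X (0, β) * b β := by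
  calc
    _ = ∑ γ, MvPowerSeries.X (0, γ) *
        ∑ α, ∑ β, MvPowerSeries.C (ηinv α β) * MvPowerSeries.C (η α γ) * b β := by
      simp only [iterPderiv_cons, iterPderiv_nil, pderiv_zero_stringTerm hη, Finset.mul_sum,
        Finset.sum_mul]
      symm
      rw [Finset.sum_comm]
      refine Finset.sum_congr rfl fun α _ => ?_
      rw [Finset.sum_comm]
      refine Finset.sum_congr rfl fun β _ => Finset.sum_congr rfl fun γ _ => ?_
      ring
    _ = _ := by simp only [sum_contract hη hinv]

theorem sum_contract_stringTerm_singleton (hη : ∀ α β, η α β = η β α) (hinv : η * ηinv = 1)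
    (γ : Fin N) (b : Fin N → R N) :
    ∑ α, ∑ β, MvPowerSeries.C (ηinv α β) * iterPderiv [(0, α), (0, γ)] (stringTerm η) * b β =
      b γ := by
  simp only [iterPderiv_pair_stringTerm hη, sum_contract hη hinv]

end Contraction

section Reduction

variable {N : ℕ} [NeZero N] {η ηinv : Matrix (Fin N) (Fin N) ℚ} {F : ℕ → R N} {g : ℕ}

/-- The part of `Ψ` that is linear in the potential and present only for at most one entry on the
left. -/
noncomputable def edgeTerm (f : R N) (m : ℕ) : List (ℕ × Fin N) → List (ℕ × Fin N) → R N
  | [], Vs => tildeSum N fun p => iterPderiv ((p.1 + m + 1, p.2) :: Vs) f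
  | [w], Vs => iterPderiv ((w.1 + m + 1, w.2) :: Vs) f
  | _ :: _ :: _, _ => 0

theorem psi_coordList (m : ℕ) (Ws Vs : List (ℕ × Fin N)) :
    Psi N ηinv F g m (coordList N Ws) (coordList N Vs) =
      splitSum ηinv g m (fun h q => iterPderiv (q :: Ws) (F h))
          (fun h q => iterPderiv (q :: Vs) (F h)) -
        edgeTerm (F g) m Ws Vs + (-1) ^ (m + 1) * edgeTerm (F g) m Vs Ws := by
  have hb : ∀ (h n : ℕ) (α : Fin N) (L : List (ℕ × Fin N)),
      Bracket N F h (((n : ℤ), α) :: coordList N L) = iterPderiv ((n, α) :: L) (F h) :=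
    fun h n α L => bracket_coordList F h ((n, α) :: L)
  have hb' : ∀ (h n : ℕ) (α : Fin N) (L : List (ℕ × Fin N)),
      Bracket N F h (((n : ℤ) + m + 1, α) :: coordList N L) =
        iterPderiv ((n + m + 1, α) :: L) (F h) := fun h n α L => by
    rw [← hb]
    push_cast
    rfl
  have hb'' : ∀ (h n : ℕ) (α : Fin N) (L : List (ℕ × Fin N)),
      Bracket N F h (coordList N L ++ [((n : ℤ) + m + 1, α)]) =
        iterPderiv ((n + m + 1, α) :: L) (F h) := fun h n α L => by
    rw [iterPderiv_perm (List.perm_append_singleton _ L).symm, ← bracket_coordList]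
    simp [coordList]
  unfold Psi
  simp only [hb]
  congr 1
  · congr 1
    rcases Ws with _ | ⟨w, _ | ⟨w', Ws⟩⟩
    · exact congrArg (seriesSum N) (funext fun p => congrArg _ (hb' _ _ _ _))
    · exact hb' _ _ _ _
    · rfl
  · congr 1
    rcases Vs with _ | ⟨v, _ | ⟨v', Vs⟩⟩
    · exact congrArg (seriesSum N) (funext fun p => congrArg _ (hb' _ _ _ _))
    · exact hb'' _ _ _ _
    · rfl

theorem psi_coordList_swap (hηinv : ∀ α β, ηinv α β = ηinv β α) (m : ℕ)
    (Ws Vs : List (ℕ × Fin N)) :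
    Psi N ηinv F g m (coordList N Ws) (coordList N Vs) =
      (-1) ^ m * Psi N ηinv F g m (coordList N Vs) (coordList N Ws) := by
  have hsq : ((-1 : R N) ^ m) * (-1) ^ m = 1 := by rw [← mul_pow]; simp
  rw [psi_coordList, psi_coordList, splitSum_swap ηinv g m hηinv, pow_succ]
  linear_combination (edgeTerm (F g) m Ws Vs) * hsq

theorem stringSum_edgeTerm_left (hη : ∀ α β, η α β = η β α) (hinv : η * ηinv = 1) (f : R N)
    (m : ℕ) (Ws Vs : List (ℕ × Fin N)) :
    stringSum N (fun p => edgeTerm f (m + 1) (p :: Ws) Vs) =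
      edgeTerm f m Ws Vs - lowerSum Ws (fun L => edgeTerm f (m + 1) L Vs) -
        ∑ α, ∑ β, MvPowerSeries.C (ηinv α β) * iterPderiv ((0, α) :: Ws) (stringTerm η) *
          iterPderiv ((m + 1, β) :: Vs) f := by
  rcases Ws with _ | ⟨w, _ | ⟨w', Ws⟩⟩
  · rw [sum_contract_stringTerm_nil hη hinv fun β => iterPderiv ((m + 1, β) :: Vs) f]
    simp only [edgeTerm, tildeSum_eq_stringSum_add, lowerSum_nil, raise_apply, zero_add, sub_zero,
      add_sub_cancel_right]
    simp only [add_comm, add_left_comm]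
  · have hzero : stringSum N (fun p => edgeTerm f (m + 1) [p, w] Vs) = 0 := map_zero _
    rw [hzero, lowerSum_cons, lowerSum_nil, add_zero]
    obtain ⟨_ | n, γ⟩ := w
    · rw [sum_contract_stringTerm_singleton hη hinv γ fun β => iterPderiv ((m + 1, β) :: Vs) f]
      simp [edgeTerm, lowerEntry]
    · simp only [iterPderiv_perm (.swap (n + 1, γ) _ _), iterPderiv_succ_stringTerm]
      simp [edgeTerm, lowerEntry, add_comm, add_left_comm]
  · have hzero : stringSum N (fun p => edgeTerm f (m + 1) (p :: w :: w' :: Ws) Vs) = 0 :=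
      map_zero _
    have hlow : lowerSum (w :: w' :: Ws) (fun L => edgeTerm f (m + 1) L Vs) = 0 :=
      lowerSum_eq_zero _ _ fun L hL _ => by
        rcases L with _ | ⟨_, _ | ⟨_, _⟩⟩ <;> simp_all [edgeTerm]
    rw [hzero, hlow]
    simp [iterPderiv_triple_stringTerm hη, edgeTerm, -iterPderiv_cons]

theorem StringEqHyp.stringSum_iterPderiv_succ (hF : StringEqHyp N η F g) (n : ℕ) (α : Fin N)
    (L : List (ℕ × Fin N)) :
    stringSum N (fun p => iterPderiv ((n + 1, α) :: p :: L) (F g)) =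
      -iterPderiv ((n, α) :: L) (F g) -
        lowerSum L fun L' => iterPderiv ((n + 1, α) :: L') (F g) := by
  simp only [iterPderiv_perm (.swap _ (n + 1, α) L)]
  rw [hF.stringSum_iterPderiv le_rfl, iterPderiv_succ_stringTerm, lowerSum_cons]
  simp only [lowerEntry, LinearMap.proj_apply, ite_self]
  ring

theorem StringEqHyp.stringSum_edgeTerm_right (hF : StringEqHyp N η F g) (m : ℕ)
    (Ws Vs : List (ℕ × Fin N)) :
    stringSum N (fun p => edgeTerm (F g) (m + 1) Vs (p :: Ws)) =
      -edgeTerm (F g) m Vs Ws - lowerSum Ws fun L => edgeTerm (F g) (m + 1) Vs L := by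
  rcases Vs with _ | ⟨v, _ | ⟨v', Vs⟩⟩
  · simp only [edgeTerm]
    rw [stringSum_tildeSum, ← linearMap_lowerSum, ← map_neg, ← map_sub]
    congr 1
    funext q
    exact hF.stringSum_iterPderiv_succ _ _ _
  · exact hF.stringSum_iterPderiv_succ _ _ _
  · have h₁ : stringSum N (fun p => edgeTerm (F g) (m + 1) (v :: v' :: Vs) (p :: Ws)) = 0 :=
      map_zero _
    have h₂ : lowerSum Ws (fun L => edgeTerm (F g) (m + 1) (v :: v' :: Vs) L) = 0 := map_zero _
    rw [h₁, h₂]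
    simp [edgeTerm]

theorem StringEqHyp.stringSum_splitSum (hF : StringEqHyp N η F g) (m : ℕ)
    (Ws : List (ℕ × Fin N)) (B : ℕ → ℕ × Fin N → R N) :
    stringSum N (fun p => splitSum ηinv g (m + 1) (fun h q => iterPderiv (q :: p :: Ws) (F h)) B) =
      splitSum ηinv g m (fun h q => iterPderiv (q :: Ws) (F h)) B -
        lowerSum Ws (fun L =>
          splitSum ηinv g (m + 1) (fun h q => iterPderiv (q :: L) (F h)) B) -
        ∑ α, ∑ β, MvPowerSeries.C (ηinv α β) * iterPderiv ((0, α) :: Ws) (stringTerm η) *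
          B g (m + 1, β) := by
  rw [linearMap_splitSum, linearMap_splitSum,
    splitSum_congr (A' := fun h q => -(if h = 0 then iterPderiv (q :: Ws) (stringTerm η) else 0) -
      lowerEntry q (fun v => iterPderiv (v :: Ws) (F h)) -
      lowerSum Ws fun L => iterPderiv (q :: L) (F h)),
    splitSum_sub, splitSum_sub, splitSum_neg, splitSum_lowerEntry,
    splitSum_genus_zero _ _ _ fun n α => iterPderiv_succ_stringTerm η n α Ws]
  · ring
  · intro h hh q
    simp only [iterPderiv_perm (.swap _ q Ws)]
    rw [hF.stringSum_iterPderiv hh, lowerSum_cons]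
    ring

/-- Inserting the string vector field into `Ψ` lowers the number of entries by one. -/
theorem StringEqHyp.stringSum_psi (hF : StringEqHyp N η F g) (hη : ∀ α β, η α β = η β α)
    (hinv : η * ηinv = 1) (m : ℕ) (Ws Vs : List (ℕ × Fin N)) :
    stringSum N (fun p => Psi N ηinv F g (m + 1) (coordList N (p :: Ws)) (coordList N Vs)) =
      Psi N ηinv F g m (coordList N Ws) (coordList N Vs) -
        lowerSum Ws fun L => Psi N ηinv F g (m + 1) (coordList N L) (coordList N Vs) := by
  have expand : ∀ {ι : Type} (ℓ : (ι → R N) →ₗ[R N] R N) (a b c : ι → R N) (u : R N),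
      ℓ (fun i => a i - b i + u * c i) = ℓ a - ℓ b + u * ℓ c := fun ℓ a b c u => by
    rw [← smul_eq_mul, ← map_smul, ← map_sub, ← map_add]
    rfl
  simp only [psi_coordList, expand]
  rw [hF.stringSum_splitSum, stringSum_edgeTerm_left hη hinv, hF.stringSum_edgeTerm_right]
  ring

/-- Vanishing of `Ψ_{r,s,g,m}` on all coordinate entries, in the range `m ≥ 2g - 3 + r + s`. -/
def PsiVanishes (ηinv : Matrix (Fin N) (Fin N) ℚ) (F : ℕ → R N) (g r s : ℕ) : Prop :=
  ∀ m : ℕ, 2 * (g : ℤ) - 3 + (r : ℤ) + (s : ℤ) ≤ (m : ℤ) →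
    ∀ Ws Vs : List (ℕ × Fin N), Ws.length = r → Vs.length = s →
      Psi N ηinv F g m (coordList N Ws) (coordList N Vs) = 0

theorem PsiVanishes.symm (hηinv : ∀ α β, ηinv α β = ηinv β α) {r s : ℕ}
    (H : PsiVanishes ηinv F g r s) : PsiVanishes ηinv F g s r := fun m hm Ws Vs hWs hVs => by
  rw [psi_coordList_swap hηinv, H m (by linarith) Vs Ws hVs hWs, mul_zero]

theorem PsiVanishes.of_succ (hF : StringEqHyp N η F g) (hη : ∀ α β, η α β = η β α)
    (hinv : η * ηinv = 1) {r s : ℕ} (H : PsiVanishes ηinv F g (r + 1) s) :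
    PsiVanishes ηinv F g r s := by
  suffices h : ∀ d m : ℕ, 2 * (g : ℤ) - 3 + (r : ℤ) + (s : ℤ) ≤ (m : ℤ) →
      ∀ Ws Vs : List (ℕ × Fin N), (Ws.map Prod.fst).sum = d → Ws.length = r → Vs.length = s →
        Psi N ηinv F g m (coordList N Ws) (coordList N Vs) = 0 from
    fun m hm Ws Vs => h _ m hm Ws Vs rfl
  intro d
  induction d using Nat.strong_induction_on with
  | _ d ih =>
    intro m hm Ws Vs hd hWs hVs
    have hstring := hF.stringSum_psi hη hinv m Ws Vs
    have hzero : ∀ p, Psi N ηinv F g (m + 1) (coordList N (p :: Ws)) (coordList N Vs) = 0 :=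
      fun p => H (m + 1) (by push_cast; linarith) _ _ (by simp [hWs]) hVs
    rw [lowerSum_eq_zero Ws _ fun L hL hlt =>
      ih _ (hd ▸ hlt) (m + 1) (by push_cast; linarith) L Vs rfl (hL.trans hWs) hVs] at hstring
    simp only [hzero, sub_zero] at hstring
    rw [← hstring]
    exact map_zero _

theorem PsiVanishes.mono_left (hF : StringEqHyp N η F g) (hη : ∀ α β, η α β = η β α)
    (hinv : η * ηinv = 1) {r r' s : ℕ} (hr : r ≤ r') (H : PsiVanishes ηinv F g r' s) :
    PsiVanishes ηinv F g r s :=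
  Nat.decreasingInduction (fun _ _ h => h.of_succ hF hη hinv) H hr

end Reduction

/-- If `Ψ_{r̂,ŝ,g,m} = 0` for all `m ≥ 2g−3+r̂+ŝ` and all coordinate entries,
then `Ψ_{r,s,g,m} = 0` for all `r ≤ r̂`, `s ≤ ŝ`, `m ≥ 2g−3+r+s` and all
coordinate entries. -/
theorem psi_vanishing_reduce (N : ℕ) [NeZero N]
    (η ηinv : Matrix (Fin N) (Fin N) ℚ)
    (hηsymm : ∀ α β, η α β = η β α)
    (hinv : η * ηinv = 1) (hinv' : ηinv * η = 1)
    (g : ℕ) (F : ℕ → R N) (hstring : StringEqHyp N η F g)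
    (rhat shat : ℕ)
    (H : ∀ m : ℕ, 2 * (g : ℤ) - 3 + (rhat : ℤ) + (shat : ℤ) ≤ (m : ℤ) →
      ∀ Ws Vs : List (ℕ × Fin N), Ws.length = rhat → Vs.length = shat →
        Psi N ηinv F g m (coordList N Ws) (coordList N Vs) = 0)
    (r s : ℕ) (hr : r ≤ rhat) (hs : s ≤ shat)
    (m : ℕ) (hm : 2 * (g : ℤ) - 3 + (r : ℤ) + (s : ℤ) ≤ (m : ℤ))
    (Ws Vs : List (ℕ × Fin N)) (hWs : Ws.length = r) (hVs : Vs.length = s) :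
    Psi N ηinv F g m (coordList N Ws) (coordList N Vs) = 0 := by
  have hηinv := inverse_symm hηsymm hinv
  have H₁ : PsiVanishes ηinv F g r shat :=
    PsiVanishes.mono_left hstring hηsymm hinv hr (r' := rhat) H
  exact ((H₁.symm hηinv).mono_left hstring hηsymm hinv hs).symm hηinv m hm Ws Vs hWs hVs

end GWBigPhase
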